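/- arXiv:2402.00480 — 2 statements merged into one kernel-verified Lean document; each statement's English description precedes it below -/
import Mathlib

section
/- Coercivity of the three-dimensional symmetrised stress bilinear form (core of the existence and uniqueness theorem): let χ ∈ [2/3, 1] and let σ : ℝ³ → ℝ^{3×3} be a smooth, compactly supported, symmetric matrix field. Then ∫_{ℝ³} ( ‖Dσ‖² + 2χ ⟨Div σ, ∇ tr σ⟩ ) dx ≥ (1/12) ∫_{ℝ³} ‖Dσ‖² dx. -/
/-!
Up to null Lagrangians the integrand is a sum of squares. Write `A = ‖Dσ‖²`, `V = Div σ`,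
`T = ∇ tr σ` and `Q = Σ ∂_k σ_ij ∂_j σ_ik`. Two integrations by parts exchange the derivatives
in a product `∂_k f ∂_j g` (`integral_pd_mul_pd_comm`), so `∫ Q = ∫ |V|²`. Pointwise, the tensor
`M_ijk = ∂_k σ_ij - ∂_j σ_ik` satisfies `‖M‖² = 2 (A - Q)`, and its trace `Σ_i M_iik` is
`T_k - V_k`, which has only two nonzero summands; Cauchy-Schwarz yields `|T - V|² ≤ 2 (A - Q)`.
Therefore, with `m = 11/12`,

`m A + 2χ ⟨V, T⟩ - m (Q - |V|²) ≥ (m/2) |T - V|² + m |V|² + 2χ ⟨V, T⟩`,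

and the right-hand side is a nonnegative quadratic form in `(V, T)` for `χ ∈ [2/3, 1]`
(`pointwise_bound`). Integrating this inequality removes the term `Q - |V|²`.
-/

noncomputable section
open scoped BigOperators
open MeasureTheory

/-- Points of `ℝ³`. -/
abbrev V3 : Type := Fin 3 → ℝ

/-- `k`-th partial derivative of a scalar field on `ℝ³`. -/
noncomputable def pd (k : Fin 3) (f : V3 → ℝ) (x : V3) : ℝ :=
  fderiv ℝ f x (Pi.single k 1)

/-- Levi-Civita symbol on `Fin 3`. -/
noncomputable def eps3 (i j k : Fin 3) : ℝ :=
  (((j.val : ℝ) - (i.val : ℝ)) * ((k.val : ℝ) - (i.val : ℝ)) * ((k.val : ℝ) - (j.val : ℝ))) / 2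

/-- Trace of a matrix field. -/
noncomputable def trM (σ : V3 → Fin 3 → Fin 3 → ℝ) (x : V3) : ℝ := ∑ i, σ x i i

/-- Row-wise divergence of a matrix field: `(Div σ)_i = Σ_j ∂_j σ_{ij}`. -/
noncomputable def DivM (σ : V3 → Fin 3 → Fin 3 → ℝ) (x : V3) (i : Fin 3) : ℝ :=
  ∑ j, pd j (fun y => σ y i j) x

/-- Divergence of a vector field. -/
noncomputable def divV (v : V3 → Fin 3 → ℝ) (x : V3) : ℝ :=
  ∑ i, pd i (fun y => v y i) x

/-- Laplacian of a scalar field. -/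
noncomputable def lapS (f : V3 → ℝ) (x : V3) : ℝ := ∑ k, pd k (pd k f) x

/-- Hessian of a scalar field. -/
noncomputable def hessS (f : V3 → ℝ) (x : V3) (i j : Fin 3) : ℝ := pd i (pd j f) x

/-- Componentwise Laplacian of a matrix field. -/
noncomputable def lapM (σ : V3 → Fin 3 → Fin 3 → ℝ) (x : V3) (i j : Fin 3) : ℝ :=
  ∑ k, pd k (pd k (fun y => σ y i j)) x

/-- `div Div σ = Σ_{i,j} ∂_i ∂_j σ_{ij}`. -/
noncomputable def divDivM (σ : V3 → Fin 3 → Fin 3 → ℝ) (x : V3) : ℝ :=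
  ∑ i, ∑ j, pd i (pd j (fun y => σ y i j)) x

/-- `(sym (D Div σ))_{ij} = (∂_j (Div σ)_i + ∂_i (Div σ)_j)/2`. -/
noncomputable def symDDivM (σ : V3 → Fin 3 → Fin 3 → ℝ) (x : V3) (i j : Fin 3) : ℝ :=
  (pd j (fun y => DivM σ y i) x + pd i (fun y => DivM σ y j) x) / 2

/-- Symmetrised gradient of a vector field: `(sym D f)_{ij} = (∂_j f_i + ∂_i f_j)/2`. -/
noncomputable def symDV (f : V3 → Fin 3 → ℝ) (x : V3) (i j : Fin 3) : ℝ :=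
  (pd j (fun y => f y i) x + pd i (fun y => f y j) x) / 2

/-- Incompatibility operator `(inc σ)_{ij} = Σ ε_{ikl} ε_{jmn} ∂_k ∂_m σ_{ln}`. -/
noncomputable def incM (σ : V3 → Fin 3 → Fin 3 → ℝ) (x : V3) (i j : Fin 3) : ℝ :=
  ∑ k, ∑ l, ∑ m, ∑ n, eps3 i k l * eps3 j m n * pd k (pd m (fun y => σ y l n)) x

/-- Row-wise curl of a matrix field: `(Curl σ)_{ij} = Σ_{k,l} ε_{jkl} ∂_k σ_{il}`. -/
noncomputable def CurlM (σ : V3 → Fin 3 → Fin 3 → ℝ) (x : V3) (i j : Fin 3) : ℝ :=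
  ∑ k, ∑ l, eps3 j k l * pd k (fun y => σ y i l) x

/-- Kronecker delta / identity matrix entry. -/
noncomputable def idd (i j : Fin 3) : ℝ := if i = j then 1 else 0

lemma contDiff_pd {f : V3 → ℝ} (hf : ContDiff ℝ (⊤ : ℕ∞) f) (k : Fin 3) :
    ContDiff ℝ (⊤ : ℕ∞) (pd k f) :=
  (hf.fderiv_right (m := (⊤ : ℕ∞)) (by simp)).clm_apply contDiff_const

lemma hasCompactSupport_pd {f : V3 → ℝ} (hf : HasCompactSupport f) (k : Fin 3) :
    HasCompactSupport (pd k f) :=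
  hf.fderiv_apply ℝ _

lemma pd_comm {f : V3 → ℝ} (hf : ContDiff ℝ (⊤ : ℕ∞) f) (j k : Fin 3) :
    pd j (pd k f) = pd k (pd j f) := by
  have key : ∀ (a b : Fin 3) (x : V3), pd a (pd b f) x =
      fderiv ℝ (fderiv ℝ f) x (Pi.single a 1) (Pi.single b 1) := by
    intro a b x
    have hd : DifferentiableAt ℝ (fderiv ℝ f) x :=
      ((hf.fderiv_right (m := (⊤ : ℕ∞)) (by simp)).differentiable (by simp)) x
    change fderiv ℝ (fun y => fderiv ℝ f y (Pi.single b 1)) x (Pi.single a 1) = _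
    rw [fderiv_clm_apply hd (by fun_prop)]
    simp
  funext x
  rw [key, key]
  have h : IsSymmSndFDerivAt ℝ f x :=
    hf.contDiffAt.isSymmSndFDerivAt (by
      rw [minSmoothness_of_isRCLikeNormedField]
      exact WithTop.coe_le_coe.2 le_top)
  exact h _ _

lemma integrable_mul_of_smooth {f g : V3 → ℝ} (hf : ContDiff ℝ (⊤ : ℕ∞) f)
    (hg : ContDiff ℝ (⊤ : ℕ∞) g) (hfc : HasCompactSupport f) :
    Integrable (fun x => f x * g x) :=
  (hf.continuous.mul hg.continuous).integrable_of_hasCompactSupport hfc.mul_right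

lemma integral_mul_pd {f g : V3 → ℝ} (hf : ContDiff ℝ (⊤ : ℕ∞) f)
    (hg : ContDiff ℝ (⊤ : ℕ∞) g) (hfc : HasCompactSupport f) (k : Fin 3) :
    ∫ x, f x * pd k g x = - ∫ x, pd k f x * g x :=
  integral_mul_fderiv_eq_neg_fderiv_mul_of_integrable
    (integrable_mul_of_smooth (contDiff_pd hf k) hg (hasCompactSupport_pd hfc k))
    (integrable_mul_of_smooth hf (contDiff_pd hg k) hfc)
    (integrable_mul_of_smooth hf hg hfc)
    (fun x _ => hf.differentiable (by simp) x) (fun x _ => hg.differentiable (by simp) x)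

/-- `∂_k f ∂_j g - ∂_j f ∂_k g` is a null Lagrangian: both integrals equal `-∫ f ∂_j ∂_k g`. -/
lemma integral_pd_mul_pd_comm {f g : V3 → ℝ} (hf : ContDiff ℝ (⊤ : ℕ∞) f)
    (hg : ContDiff ℝ (⊤ : ℕ∞) g) (hfc : HasCompactSupport f) (j k : Fin 3) :
    ∫ x, pd k f x * pd j g x = ∫ x, pd j f x * pd k g x := by
  have h1 := integral_mul_pd hf (contDiff_pd hg j) hfc k
  have h2 := integral_mul_pd hf (contDiff_pd hg k) hfc j
  rw [pd_comm hg k j] at h1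
  linarith

/-- For `V`, `T` single components of `Div σ` and `∇ tr σ`. -/
lemma scalar_form_nonneg (χ V T : ℝ) (hχ1 : 2 / 3 ≤ χ) (hχ2 : χ ≤ 1) :
    0 ≤ 11 / 24 * (T - V) ^ 2 + 11 / 12 * V ^ 2 + 2 * χ * (V * T) := by
  -- The cross term has coefficient `2χ - 11/12 ≥ 0`; the weights `3 : 5` approximate `1 : √3`,
  -- the ratio of the square roots of the coefficients `11/24` and `11/8` of `T²` and `V²`.
  nlinarith [mul_nonneg (by linarith : (0 : ℝ) ≤ 2 * χ - 11 / 12) (sq_nonneg (3 * T + 5 * V)),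
    mul_nonneg (by linarith : (0 : ℝ) ≤ 1 - χ) (sq_nonneg T),
    mul_nonneg (by linarith : (0 : ℝ) ≤ 1 - χ) (sq_nonneg V), sq_nonneg T, sq_nonneg V]

/-- The algebraic inequality behind the theorem, with `d i j k` in the role of `∂_k σ_ij`. The
left-hand side is `11/12` times `Q - |Div σ|²`, where `Q = Σ ∂_k σ_ij ∂_j σ_ik`; it integrates to zero. -/
lemma pointwise_bound (χ : ℝ) (hχ1 : 2 / 3 ≤ χ) (hχ2 : χ ≤ 1) (d : Fin 3 → Fin 3 → Fin 3 → ℝ)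
    (hd : ∀ i j k, d i j k = d j i k) :
    11 / 12 * ∑ i, ∑ j, ∑ k, (d i j k * d i k j - d i j j * d i k k) ≤
      11 / 12 * (∑ i, ∑ j, ∑ k, d i j k ^ 2)
        + 2 * χ * ∑ i, (∑ j, d i j j) * ∑ m, d m m i := by
  have hS := fun i => scalar_form_nonneg χ (∑ j, d i j j) (∑ m, d m m i) hχ1 hχ2
  have h0 := hS 0
  have h1 := hS 1
  have h2 := hS 2
  simp only [Fin.sum_univ_three] at h0 h1 h2 ⊢
  simp only [hd 1 0, hd 2 0, hd 2 1] at h0 h1 h2 ⊢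
  -- The squares are the components `M_ijk` with distinct indices, and the Cauchy-Schwarz defects
  -- `2 (x² + y²) - (x + y)² = (x - y)²` of the two summands `x`, `y` of each trace component.
  linarith [h0, h1, h2,
    sq_nonneg (d 0 1 2 - d 0 2 1), sq_nonneg (d 0 1 2 - d 1 2 0), sq_nonneg (d 0 2 1 - d 1 2 0),
    sq_nonneg ((d 1 1 0 - d 0 1 1) - (d 2 2 0 - d 0 2 2)),
    sq_nonneg ((d 0 0 1 - d 0 1 0) - (d 2 2 1 - d 1 2 2)),
    sq_nonneg ((d 0 0 2 - d 0 2 0) - (d 1 1 2 - d 1 2 1))]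

/-- **Coercivity of the three-dimensional symmetrised stress bilinear form.** For
`χ ∈ [2/3, 1]` and a smooth, compactly supported, symmetric matrix field `σ` on `ℝ³`:
`∫ (‖Dσ‖² + 2χ ⟨Div σ, ∇ tr σ⟩) ≥ (1/12) ∫ ‖Dσ‖²`. -/
theorem coercivity_3d
    (χ : ℝ) (hχ1 : 2 / 3 ≤ χ) (hχ2 : χ ≤ 1)
    (σ : V3 → Fin 3 → Fin 3 → ℝ)
    (hσ : ContDiff ℝ (⊤ : ℕ∞) σ) (hc : HasCompactSupport σ)
    (hsym : ∀ x, ∀ i j, σ x i j = σ x j i) :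
    (1 / 12) * (∫ x : V3, ∑ i, ∑ j, ∑ k, (pd k (fun y => σ y i j) x) ^ 2) ≤
      ∫ x : V3, ((∑ i, ∑ j, ∑ k, (pd k (fun y => σ y i j) x) ^ 2)
        + 2 * χ * ∑ i, DivM σ x i * pd i (trM σ) x) := by
  have hf : ∀ i j, ContDiff ℝ (⊤ : ℕ∞) (fun y => σ y i j) := fun i j =>
    contDiff_pi.1 (contDiff_pi.1 hσ i) j
  have hfc : ∀ i j, HasCompactSupport (fun y => σ y i j) := fun i j =>
    hc.comp_left (g := fun s : Fin 3 → Fin 3 → ℝ => s i j) rfl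
  have htr : ∀ i x, pd i (trM σ) x = ∑ m, pd i (fun y => σ y m m) x := by
    intro i x
    change fderiv ℝ (fun y => ∑ m, σ y m m) x _ = _
    rw [fderiv_fun_sum fun m _ => (hf m m).differentiable (by simp) x]
    simp [pd]
  have hprod : ∀ i j k i' j' k', Integrable
      (fun x => pd k (fun y => σ y i j) x * pd k' (fun y => σ y i' j') x) :=
    fun i j k i' j' k' => integrable_mul_of_smooth (contDiff_pd (hf i j) k)
      (contDiff_pd (hf i' j') k') (hasCompactSupport_pd (hfc i j) k)
  have hA : Integrable (fun x => ∑ i, ∑ j, ∑ k, (pd k (fun y => σ y i j) x) ^ 2) := by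
    simp only [pow_two]
    exact integrable_finsetSum _ fun i _ => integrable_finsetSum _ fun j _ =>
      integrable_finsetSum _ fun k _ => hprod i j k i j k
  have hC : Integrable (fun x => ∑ i, DivM σ x i * pd i (trM σ) x) := by
    simp only [htr, DivM, Finset.sum_mul_sum]
    exact integrable_finsetSum _ fun i _ => integrable_finsetSum _ fun j _ =>
      integrable_finsetSum _ fun m _ => hprod i j j m m i
  have hNi : ∀ i j k, Integrable (fun x =>
      pd k (fun y => σ y i j) x * pd j (fun y => σ y i k) x
        - pd j (fun y => σ y i j) x * pd k (fun y => σ y i k) x) := fun i j k =>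
    (hprod i j k i k j).sub (hprod i j j i k k)
  have hNint : Integrable (fun x => ∑ i, ∑ j, ∑ k,
      (pd k (fun y => σ y i j) x * pd j (fun y => σ y i k) x
        - pd j (fun y => σ y i j) x * pd k (fun y => σ y i k) x)) :=
    integrable_finsetSum _ fun i _ => integrable_finsetSum _ fun j _ =>
      integrable_finsetSum _ fun k _ => hNi i j k
  have hN : ∫ x : V3, ∑ i, ∑ j, ∑ k,
      (pd k (fun y => σ y i j) x * pd j (fun y => σ y i k) x
        - pd j (fun y => σ y i j) x * pd k (fun y => σ y i k) x) = 0 := by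
    rw [integral_finsetSum _ fun i _ => integrable_finsetSum _ fun j _ =>
      integrable_finsetSum _ fun k _ => hNi i j k]
    refine Finset.sum_eq_zero fun i _ => ?_
    rw [integral_finsetSum _ fun j _ => integrable_finsetSum _ fun k _ => hNi i j k]
    refine Finset.sum_eq_zero fun j _ => ?_
    rw [integral_finsetSum _ fun k _ => hNi i j k]
    refine Finset.sum_eq_zero fun k _ => ?_
    rw [integral_sub (hprod i j k i k j) (hprod i j j i k k),
      integral_pd_mul_pd_comm (hf i j) (hf i k) (hfc i j) j k, sub_self]
  have hmono := integral_mono (hNint.const_mul (11 / 12))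
    ((hA.const_mul (11 / 12)).add (hC.const_mul (2 * χ))) (fun x => by
      have h := pointwise_bound χ hχ1 hχ2 (fun i j k => pd k (fun y => σ y i j) x)
        (fun i j k => by simp only [hsym _ i j])
      simpa only [Pi.add_apply, htr, DivM] using h)
  rw [integral_const_mul, hN] at hmono
  simp only [Pi.add_apply] at hmono
  rw [integral_add (hA.const_mul (11 / 12)) (hC.const_mul (2 * χ)), integral_const_mul] at hmono
  rw [integral_add hA (hC.const_mul (2 * χ))]
  linarith
end
end

section
/- Coercivity of the planar stress bilinear form (core of the planar well-posedness theorem): let ψ > 0, χ > 0 and let σ : ℝ² → ℝ^{2×2} be a smooth, compactly supported, symmetric matrix field. Then ψ ∫_{ℝ²} ‖Div σ‖² dx + χ ∫_{ℝ²} ‖∇ tr σ‖² dx ≥ (min{ψ, χ}/3) ∫_{ℝ²} ‖Dσ‖² dx. -/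
/-!
Write `a = σ₁₁`, `b = σ₁₂ = σ₂₁`, `c = σ₂₂`. The inequality fails pointwise, but it holds pointwise
after adding a null Lagrangian: with `J(f, g) = ∂₁f ∂₂g - ∂₂f ∂₁g`,
`‖Dσ‖² / 3 + (4/5) (J(a, b) + J(b, c)) ≤ ‖Div σ‖² + ‖∇ tr σ‖²`  (`pointwise_bound`).
The Jacobian `J(f, g)` of two smooth compactly supported functions integrates to zero
(`integral_jacobian_eq_zero`: integrate by parts and use the symmetry of second derivatives), so
integrating gives the claim for `ψ = χ = 1`; bounding both weights below by `min ψ χ` gives the rest.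
-/


noncomputable section
open scoped BigOperators
open MeasureTheory

/-- Points of `ℝ²`. -/
abbrev V2 : Type := Fin 2 → ℝ

/-- `k`-th partial derivative of a scalar field on `ℝ²`. -/
noncomputable def pd2 (k : Fin 2) (f : V2 → ℝ) (x : V2) : ℝ :=
  fderiv ℝ f x (Pi.single k 1)

/-- Trace of a 2×2 matrix field. -/
noncomputable def trM2 (σ : V2 → Fin 2 → Fin 2 → ℝ) (x : V2) : ℝ := ∑ i, σ x i i

/-- Row-wise divergence: `(Div σ)_i = Σ_j ∂_j σ_{ij}`. -/
noncomputable def DivM2 (σ : V2 → Fin 2 → Fin 2 → ℝ) (x : V2) (i : Fin 2) : ℝ :=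
  ∑ j, pd2 j (fun y => σ y i j) x

/-- Laplacian of a scalar field on `ℝ²`. -/
noncomputable def lapS2 (f : V2 → ℝ) (x : V2) : ℝ := ∑ k, pd2 k (pd2 k f) x

/-- Hessian of a scalar field on `ℝ²`. -/
noncomputable def hessS2 (f : V2 → ℝ) (x : V2) (i j : Fin 2) : ℝ := pd2 i (pd2 j f) x

/-- Componentwise Laplacian of a 2×2 matrix field. -/
noncomputable def lapM2 (σ : V2 → Fin 2 → Fin 2 → ℝ) (x : V2) (i j : Fin 2) : ℝ :=
  ∑ k, pd2 k (pd2 k (fun y => σ y i j)) x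

/-- `div Div σ = Σ_{i,j} ∂_i ∂_j σ_{ij}`. -/
noncomputable def divDivM2 (σ : V2 → Fin 2 → Fin 2 → ℝ) (x : V2) : ℝ :=
  ∑ i, ∑ j, pd2 i (pd2 j (fun y => σ y i j)) x

/-- `(sym (D Div σ))_{ij} = (∂_j (Div σ)_i + ∂_i (Div σ)_j)/2`. -/
noncomputable def symDDivM2 (σ : V2 → Fin 2 → Fin 2 → ℝ) (x : V2) (i j : Fin 2) : ℝ :=
  (pd2 j (fun y => DivM2 σ y i) x + pd2 i (fun y => DivM2 σ y j) x) / 2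

/-- Row-wise rotated divergence: `(Rot σ)_i = ∂₁ σ_{i2} − ∂₂ σ_{i1}`. -/
noncomputable def RotM2 (σ : V2 → Fin 2 → Fin 2 → ℝ) (x : V2) (i : Fin 2) : ℝ :=
  pd2 0 (fun y => σ y i 1) x - pd2 1 (fun y => σ y i 0) x

/-- Rotated gradient `∇⊥λ = (∂₂ λ, −∂₁ λ)`. -/
noncomputable def perpGrad (f : V2 → ℝ) (x : V2) : Fin 2 → ℝ :=
  ![pd2 1 f x, -(pd2 0 f x)]

/-- Action of the rotation matrix `R = [[0,1],[−1,0]]` on a vector. -/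
noncomputable def rotR (v : Fin 2 → ℝ) : Fin 2 → ℝ := ![v 1, -(v 0)]

/-- Kronecker delta / 2×2 identity matrix entry. -/
noncomputable def idd2 (i j : Fin 2) : ℝ := if i = j then 1 else 0

lemma contDiff_pd2 (k : Fin 2) {f : V2 → ℝ} (hf : ContDiff ℝ (⊤ : ℕ∞) f) :
    ContDiff ℝ (⊤ : ℕ∞) (pd2 k f) :=
  (hf.fderiv_right (m := (⊤ : ℕ∞)) (by simp)).clm_apply contDiff_const

lemma hasCompactSupport_pd2 (k : Fin 2) {f : V2 → ℝ} (hf : HasCompactSupport f) :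
    HasCompactSupport (pd2 k f) :=
  hf.fderiv_apply (𝕜 := ℝ) (Pi.single k 1)

lemma pd2_comm {f : V2 → ℝ} (hf : ContDiff ℝ (⊤ : ℕ∞) f) (j k : Fin 2) (x : V2) :
    pd2 j (pd2 k f) x = pd2 k (pd2 j f) x := by
  have hd : DifferentiableAt ℝ (fderiv ℝ f) x :=
    (hf.fderiv_right (m := (⊤ : ℕ∞)) (by simp)).differentiable (by simp) x
  have key : ∀ u v : V2,
      fderiv ℝ (fun y => fderiv ℝ f y u) x v = fderiv ℝ (fderiv ℝ f) x v u := by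
    intro u v
    rw [fderiv_clm_apply hd (differentiableAt_const u)]
    simp
  have hs : IsSymmSndFDerivAt ℝ f x := hf.contDiffAt.isSymmSndFDerivAt (by
    simpa using WithTop.coe_le_coe.2 (le_top : (2 : ℕ∞) ≤ ⊤))
  change fderiv ℝ (fun y => fderiv ℝ f y _) x _ = fderiv ℝ (fun y => fderiv ℝ f y _) x _
  rw [key, key]
  exact hs _ _

lemma integrable_mul_of_contDiff {f g : V2 → ℝ} (hf : ContDiff ℝ (⊤ : ℕ∞) f)
    (hg : ContDiff ℝ (⊤ : ℕ∞) g) (hgc : HasCompactSupport g) :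
    Integrable (fun x => f x * g x) :=
  (hf.continuous.mul hg.continuous).integrable_of_hasCompactSupport hgc.mul_left

lemma integral_mul_pd2 {f g : V2 → ℝ} (hf : ContDiff ℝ (⊤ : ℕ∞) f)
    (hg : ContDiff ℝ (⊤ : ℕ∞) g) (hgc : HasCompactSupport g) (k : Fin 2) :
    ∫ x, f x * pd2 k g x = - ∫ x, pd2 k f x * g x :=
  integral_mul_fderiv_eq_neg_fderiv_mul_of_integrable
    (integrable_mul_of_contDiff (contDiff_pd2 k hf) hg hgc)
    (integrable_mul_of_contDiff hf (contDiff_pd2 k hg) (hasCompactSupport_pd2 k hgc))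
    (integrable_mul_of_contDiff hf hg hgc)
    (fun x _ => hf.differentiable (by simp) x) (fun x _ => hg.differentiable (by simp) x)

/-- The Jacobian determinant of `(f, g)`. -/
def jac (f g : V2 → ℝ) (x : V2) : ℝ := pd2 0 f x * pd2 1 g x - pd2 1 f x * pd2 0 g x

lemma integrable_jac {f g : V2 → ℝ} (hf : ContDiff ℝ (⊤ : ℕ∞) f)
    (hg : ContDiff ℝ (⊤ : ℕ∞) g) (hgc : HasCompactSupport g) : Integrable (jac f g) :=
  (integrable_mul_of_contDiff (contDiff_pd2 0 hf) (contDiff_pd2 1 hg)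
    (hasCompactSupport_pd2 1 hgc)).sub
  (integrable_mul_of_contDiff (contDiff_pd2 1 hf) (contDiff_pd2 0 hg)
    (hasCompactSupport_pd2 0 hgc))

/-- The Jacobian determinant is a null Lagrangian. -/
lemma integral_jacobian_eq_zero {f g : V2 → ℝ} (hf : ContDiff ℝ (⊤ : ℕ∞) f)
    (hg : ContDiff ℝ (⊤ : ℕ∞) g) (hgc : HasCompactSupport g) : ∫ x, jac f g x = 0 := by
  unfold jac
  rw [integral_sub
    (integrable_mul_of_contDiff (contDiff_pd2 0 hf) (contDiff_pd2 1 hg)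
      (hasCompactSupport_pd2 1 hgc))
    (integrable_mul_of_contDiff (contDiff_pd2 1 hf) (contDiff_pd2 0 hg)
      (hasCompactSupport_pd2 0 hgc)),
    integral_mul_pd2 (contDiff_pd2 0 hf) hg hgc, integral_mul_pd2 (contDiff_pd2 1 hf) hg hgc]
  simp only [pd2_comm hf 1 0, sub_self]

/-- One of the two `3 × 3` blocks of the quadratic form in `pointwise_bound`, which couples
`x = ∂₁a`, `y = ∂₁c`, `z = ∂₂b`. The coefficient `4/5` of the null Lagrangian makes it positive
definite (without it, the form is indefinite). -/
lemma block_nonneg (x y z : ℝ) :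
    (x ^ 2 + 2 * z ^ 2 + y ^ 2) / 3 + 4 / 5 * (x * z - z * y) ≤ (x + z) ^ 2 + (x + y) ^ 2 := by
  -- Completing squares, first in `x`, then in `y`.
  nlinarith [sq_nonneg (5 / 3 * x + y + 3 / 5 * z), sq_nonneg (y + 3 / 5 * z),
    sq_nonneg z]

/-- The coercivity estimate at the level of the six first derivatives `aₖ, bₖ, cₖ`. -/
lemma pointwise_bound_s17 (a₁ a₂ b₁ b₂ c₁ c₂ : ℝ) :
    (a₁ ^ 2 + a₂ ^ 2 + 2 * (b₁ ^ 2 + b₂ ^ 2) + c₁ ^ 2 + c₂ ^ 2) / 3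
        + 4 / 5 * ((a₁ * b₂ - a₂ * b₁) + (b₁ * c₂ - b₂ * c₁)) ≤
      ((a₁ + b₂) ^ 2 + (b₁ + c₂) ^ 2) + ((a₁ + c₁) ^ 2 + (a₂ + c₂) ^ 2) := by
  linarith [block_nonneg a₁ c₁ b₂, block_nonneg c₂ a₂ b₁]

/-- **Coercivity of the planar stress bilinear form.** For `ψ > 0`, `χ > 0` and a smooth,
compactly supported, symmetric 2×2 matrix field `σ` on `ℝ²`:
`ψ ∫ ‖Div σ‖² + χ ∫ ‖∇ tr σ‖² ≥ (min{ψ,χ}/3) ∫ ‖Dσ‖²`. -/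
theorem planar_coercivity
    (ψ χ : ℝ) (hψ : 0 < ψ) (hχ : 0 < χ)
    (σ : V2 → Fin 2 → Fin 2 → ℝ)
    (hσ : ContDiff ℝ (⊤ : ℕ∞) σ) (hc : HasCompactSupport σ)
    (hsym : ∀ x, ∀ i j, σ x i j = σ x j i) :
    (min ψ χ / 3) * (∫ x : V2, ∑ i, ∑ j, ∑ k, (pd2 k (fun y => σ y i j) x) ^ 2) ≤
      ψ * (∫ x : V2, ∑ i, (DivM2 σ x i) ^ 2)
        + χ * (∫ x : V2, ∑ i, (pd2 i (trM2 σ) x) ^ 2) := by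
  have hs : ∀ i j, ContDiff ℝ (⊤ : ℕ∞) (fun y => σ y i j) := fun i j =>
    contDiff_pi.1 (contDiff_pi.1 hσ i) j
  have hcs : ∀ i j, HasCompactSupport (fun y => σ y i j) := fun i j =>
    hc.comp_left (g := fun m : Fin 2 → Fin 2 → ℝ => m i j) rfl
  have hsq : ∀ {f : V2 → ℝ}, ContDiff ℝ (⊤ : ℕ∞) f → HasCompactSupport f →
      Integrable (fun x => f x ^ 2) := fun hf hfc => by
    simpa only [pow_two] using integrable_mul_of_contDiff hf hf hfc
  have htr : ∀ k x, pd2 k (trM2 σ) x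
      = pd2 k (fun y => σ y 0 0) x + pd2 k (fun y => σ y 1 1) x := by
    intro k x
    have : trM2 σ = fun y => σ y 0 0 + σ y 1 1 := by
      funext y; simp [trM2]
    rw [this]
    unfold pd2
    rw [fderiv_fun_add ((hs 0 0).differentiable (by simp) x)
      ((hs 1 1).differentiable (by simp) x)]
    rfl
  have h10 : (fun y => σ y 1 0) = fun y => σ y 0 1 := funext fun y => hsym y 1 0
  have hpi : ∀ i j k l m n, Integrable (fun x =>
      (pd2 k (fun y => σ y i j) x + pd2 n (fun y => σ y l m) x) ^ 2) := fun i j k l m n =>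
    hsq ((contDiff_pd2 k (hs i j)).add (contDiff_pd2 n (hs l m)))
      ((hasCompactSupport_pd2 k (hcs i j)).add (hasCompactSupport_pd2 n (hcs l m)))
  have iA : Integrable (fun x : V2 => ∑ i, ∑ j, ∑ k, (pd2 k (fun y => σ y i j) x) ^ 2) :=
    integrable_finsetSum _ fun i _ => integrable_finsetSum _ fun j _ =>
      integrable_finsetSum _ fun k _ =>
        hsq (contDiff_pd2 k (hs i j)) (hasCompactSupport_pd2 k (hcs i j))
  have iB : Integrable (fun x : V2 => ∑ i, (DivM2 σ x i) ^ 2) :=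
    integrable_finsetSum _ fun i _ => by
      simpa only [DivM2, Fin.sum_univ_two] using hpi i 0 0 i 1 1
  have iC : Integrable (fun x : V2 => ∑ i, (pd2 i (trM2 σ) x) ^ 2) :=
    integrable_finsetSum _ fun i _ => by
      simpa only [htr] using hpi 0 0 i 1 1 i
  have iJ₁ := integrable_jac (hs 0 0) (hs 0 1) (hcs 0 1)
  have iJ₂ := integrable_jac (hs 0 1) (hs 1 1) (hcs 1 1)
  have key : (∫ x : V2, ∑ i, ∑ j, ∑ k, (pd2 k (fun y => σ y i j) x) ^ 2) / 3 ≤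
      (∫ x : V2, ∑ i, (DivM2 σ x i) ^ 2) + ∫ x : V2, ∑ i, (pd2 i (trM2 σ) x) ^ 2 := by
    have iJ : Integrable (fun x => 4 / 5 * (jac (fun y => σ y 0 0) (fun y => σ y 0 1) x
        + jac (fun y => σ y 0 1) (fun y => σ y 1 1) x)) := (iJ₁.add iJ₂).const_mul _
    have hmono : ∫ x : V2, ((∑ i, ∑ j, ∑ k, (pd2 k (fun y => σ y i j) x) ^ 2) / 3
          + 4 / 5 * (jac (fun y => σ y 0 0) (fun y => σ y 0 1) x
            + jac (fun y => σ y 0 1) (fun y => σ y 1 1) x)) ≤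
        ∫ x : V2, ((∑ i, (DivM2 σ x i) ^ 2) + ∑ i, (pd2 i (trM2 σ) x) ^ 2) := by
      refine integral_mono ((iA.div_const 3).add iJ) (iB.add iC) ?_
      intro x
      simp only [Fin.sum_univ_two, DivM2, htr, h10, jac]
      linarith [pointwise_bound_s17 (pd2 0 (fun y => σ y 0 0) x) (pd2 1 (fun y => σ y 0 0) x)
        (pd2 0 (fun y => σ y 0 1) x) (pd2 1 (fun y => σ y 0 1) x)
        (pd2 0 (fun y => σ y 1 1) x) (pd2 1 (fun y => σ y 1 1) x)]
    rw [integral_add (iA.div_const 3) iJ, integral_add iB iC,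
      integral_const_mul, integral_add iJ₁ iJ₂, integral_div,
      integral_jacobian_eq_zero (hs 0 0) (hs 0 1) (hcs 0 1),
      integral_jacobian_eq_zero (hs 0 1) (hs 1 1) (hcs 1 1)] at hmono
    linarith
  have hB : 0 ≤ ∫ x : V2, ∑ i, (DivM2 σ x i) ^ 2 :=
    integral_nonneg fun x => Finset.sum_nonneg fun i _ => sq_nonneg _
  have hC : 0 ≤ ∫ x : V2, ∑ i, (pd2 i (trM2 σ) x) ^ 2 :=
    integral_nonneg fun x => Finset.sum_nonneg fun i _ => sq_nonneg _
  have h₁ := mul_le_mul_of_nonneg_left key (lt_min hψ hχ).le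
  have h₂ := mul_le_mul_of_nonneg_right (min_le_left ψ χ) hB
  have h₃ := mul_le_mul_of_nonneg_right (min_le_right ψ χ) hC
  linarith
end
end
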